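/- arXiv:2312.07339 — 3 statements merged into one kernel-verified Lean document; each statement's English description precedes it below -/
import Mathlib

section
/- Let R be a commutative ring, τ ∈ R a unit, B an m×m matrix over R, v, w ∈ R^m column vectors, and x ∈ R. Let B̃ be the (m+2)×(m+2) block matrix whose top-left m×m block is B, whose (m+1)-st column (in the first m rows) is v, whose (m+2)-nd column (in the first m rows) is 0, whose (m+1)-st row is (wᵀ, x, 1), and whose (m+2)-nd row is zero. Then the cokernel of τB̃ − B̃ᵀ is isomorphic, as an R-module, to the cokernel of τB − Bᵀ. -/
open Matrix

/-- The cokernel of a square matrix `A` over a commutative ring, i.e. the quotient of `R^m`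
by the submodule generated by the columns of `A`. -/
abbrev matCoker {R : Type*} [CommRing R] {m : ℕ} (A : Matrix (Fin m) (Fin m) R) : Type _ :=
  (Fin m → R) ⧸ LinearMap.range A.mulVecLin

/-- The `(m+2) × (m+2)` block matrix with top-left `m × m` block `B`, `(m+1)`-st column `v`
(in the first `m` rows), `(m+2)`-nd column `0` (in the first `m` rows), `(m+1)`-st row
`(wᵀ, x, 1)`, and `(m+2)`-nd row zero. -/
def tildeMat {R : Type*} [CommRing R] {m : ℕ} (B : Matrix (Fin m) (Fin m) R)
    (v w : Fin m → R) (x : R) : Matrix (Fin (m + 2)) (Fin (m + 2)) R :=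
  Matrix.of fun i j =>
    if hi : (i : ℕ) < m then
      if hj : (j : ℕ) < m then B ⟨i, hi⟩ ⟨j, hj⟩
      else if (j : ℕ) = m then v ⟨i, hi⟩
      else 0
    else if (i : ℕ) = m then
      if hj : (j : ℕ) < m then w ⟨j, hj⟩
      else if (j : ℕ) = m then x
      else 1
    else 0

/-!
Let `M = tildeMat B v w x`. Up to reindexing, `τ • M - Mᵀ` is the block matrix with diagonal blocks
`τ • B - Bᵀ` and `D = !![τ * x - x, τ; -1, 0]`. As `det D = τ` is a unit, the cokernel is that of
the Schur complement of `D`. The off-diagonal blocks only meet the top-left entry of `D⁻¹`, which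
vanishes because `D` has a zero in its bottom-right corner; so the Schur complement is `τ • B - Bᵀ`
itself.
-/

section Coker

variable {R L M N P : Type*} [Ring R] [AddCommGroup L] [AddCommGroup M] [AddCommGroup N]
  [AddCommGroup P] [Module R L] [Module R M] [Module R N] [Module R P]

/-- The cokernel of a linear map. For a square matrix `A` indexed by `Fin m`, `matCoker A` unfolds
to `Coker A.mulVecLin`; linear maps are used so that block matrices, indexed by sum types, are
covered too. -/
abbrev Coker (f : M →ₗ[R] N) : Type _ :=
  N ⧸ LinearMap.range f

/-- The isomorphism of cokernels induced by a surjective linear map `g` on the codomain whose kernel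
is already killed in the cokernel of `f`. -/
noncomputable def cokerEquivOfSurjective (f : M →ₗ[R] N) (g : N →ₗ[R] P)
    (hg : Function.Surjective g) (hker : LinearMap.ker g ≤ LinearMap.range f) :
    Coker f ≃ₗ[R] Coker (g ∘ₗ f) :=
  let q : N →ₗ[R] Coker (g ∘ₗ f) := (LinearMap.range (g ∘ₗ f)).mkQ ∘ₗ g
  have ker_q : LinearMap.ker q = LinearMap.range f := by
    rw [LinearMap.ker_comp, Submodule.ker_mkQ, LinearMap.range_comp,
      Submodule.comap_map_eq_self hker]
  (Submodule.quotEquivOfEq _ _ ker_q.symm).trans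
    (q.quotKerEquivOfSurjective ((Submodule.mkQ_surjective _).comp hg))

/-- The invariance of the cokernel under changes of coordinates in domain and codomain. -/
noncomputable def cokerEquivOfEquiv (f : M →ₗ[R] N) (e : N ≃ₗ[R] P) (e' : L ≃ₗ[R] M) :
    Coker f ≃ₗ[R] Coker (e.toLinearMap ∘ₗ f ∘ₗ e'.toLinearMap) :=
  Submodule.Quotient.equiv _ _ e <| by
    rw [LinearMap.range_comp, LinearEquiv.range_comp]

end Coker

section Reindex

variable {R l m l' m' : Type*} [CommRing R] [Fintype m] [Fintype m']

/-- The isomorphism between the cokernels of a matrix and of a reindexing of it. -/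
noncomputable def cokerReindexEquiv (A : Matrix l m R) (e : l ≃ l') (e' : m ≃ m') :
    Coker A.mulVecLin ≃ₗ[R] Coker (reindex e e' A).mulVecLin :=
  (cokerEquivOfEquiv A.mulVecLin (LinearEquiv.funCongrLeft R R e.symm)
    (LinearEquiv.funCongrLeft R R e')).trans
      (Submodule.quotEquivOfEq _ _ (by rw [mulVecLin_reindex]))

end Reindex

section SchurComplement

variable {R l m n : Type*} [CommRing R] [Fintype n]

/-- The linear map `(y₁, y₂) ↦ y₁ - X y₂` on column vectors in two blocks. For `X = B * ⅟D` it
clears the top-right block of `fromBlocks A B C D` and forgets the bottom rows. -/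
def blockElimination (X : Matrix l n R) : (l ⊕ n → R) →ₗ[R] (l → R) :=
  LinearMap.funLeft R R Sum.inl - X.mulVecLin ∘ₗ LinearMap.funLeft R R Sum.inr

lemma blockElimination_apply (X : Matrix l n R) (y : l ⊕ n → R) :
    blockElimination X y = y ∘ Sum.inl - X *ᵥ (y ∘ Sum.inr) :=
  rfl

lemma blockElimination_surjective (X : Matrix l n R) : Function.Surjective (blockElimination X) :=
  fun y => ⟨Sum.elim y 0, by simp [blockElimination_apply]⟩

variable [Fintype m] [DecidableEq n] (A : Matrix l m R) (B : Matrix l n R) (C : Matrix n m R)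
  (D : Matrix n n R) [Invertible D]

lemma blockElimination_comp_fromBlocks :
    blockElimination (B * ⅟D) ∘ₗ (fromBlocks A B C D).mulVecLin =
      (A - B * ⅟D * C).mulVecLin ∘ₗ LinearMap.funLeft R R Sum.inl := by
  refine LinearMap.ext fun y => ?_
  calc blockElimination (B * ⅟D) (fromBlocks A B C D *ᵥ y)
      = A *ᵥ (y ∘ Sum.inl) + B *ᵥ (y ∘ Sum.inr) -
          (B * ⅟D) *ᵥ (C *ᵥ (y ∘ Sum.inl) + D *ᵥ (y ∘ Sum.inr)) := by
        rw [blockElimination_apply, fromBlocks_mulVec, Sum.elim_comp_inl, Sum.elim_comp_inr]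
    _ = (A - B * ⅟D * C) *ᵥ (y ∘ Sum.inl) := by
        rw [mulVec_add, mulVec_mulVec, mulVec_mulVec, Matrix.invOf_mul_cancel_right, sub_mulVec]
        abel

lemma range_blockElimination_comp_fromBlocks :
    LinearMap.range (blockElimination (B * ⅟D) ∘ₗ (fromBlocks A B C D).mulVecLin) =
      LinearMap.range (A - B * ⅟D * C).mulVecLin := by
  rw [blockElimination_comp_fromBlocks, LinearMap.range_comp_of_range_eq_top]
  exact LinearMap.range_eq_top.mpr
    (LinearMap.funLeft_surjective_of_injective R R _ Sum.inl_injective)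

lemma ker_blockElimination_le_range_fromBlocks :
    LinearMap.ker (blockElimination (B * ⅟D)) ≤ LinearMap.range (fromBlocks A B C D).mulVecLin := by
  intro y hy
  have hy_inl : y ∘ Sum.inl = (B * ⅟D) *ᵥ (y ∘ Sum.inr) := by
    rwa [LinearMap.mem_ker, blockElimination_apply, sub_eq_zero] at hy
  refine ⟨Sum.elim 0 (⅟D *ᵥ (y ∘ Sum.inr)), ?_⟩
  calc fromBlocks A B C D *ᵥ Sum.elim 0 (⅟D *ᵥ (y ∘ Sum.inr))
      = Sum.elim ((B * ⅟D) *ᵥ (y ∘ Sum.inr)) (y ∘ Sum.inr) := by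
        simp [-invOf_eq_nonsing_inv, fromBlocks_mulVec]
    _ = y := by rw [← hy_inl, Sum.elim_comp_inl_inr]

/-- The isomorphism between the cokernel of a block matrix and that of the Schur complement of its
bottom-right block. -/
noncomputable def cokerSchurComplementEquiv :
    Coker (fromBlocks A B C D).mulVecLin ≃ₗ[R] Coker (A - B * ⅟D * C).mulVecLin :=
  (cokerEquivOfSurjective _ _ (blockElimination_surjective _)
    (ker_blockElimination_le_range_fromBlocks A B C D)).trans <|
      Submodule.quotEquivOfEq _ _ (range_blockElimination_comp_fromBlocks A B C D)

end SchurComplement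

section Border

variable {R l m : Type*} [CommRing R]

lemma isUnit_det_fin_two_of_zero {b c : R} (a : R) (hb : IsUnit b) (hc : IsUnit c) :
    IsUnit !![a, b; c, 0].det := by
  simpa [det_fin_two_of] using hb.mul hc

lemma border_mul_inv_mul_border (p : l → R) (q : m → R) (a b c : R) :
    (of ![p, 0])ᵀ * !![a, b; c, 0]⁻¹ * of ![q, 0] = 0 := by
  ext i j
  simp [inv_def, adjugate_fin_two_of, Matrix.mul_apply, Fin.sum_univ_two]

/-- The isomorphism between the cokernels of `A` and of the bordered matrix
`[[A, p, 0], [qᵀ, a, b], [0, c, 0]]`, for units `b` and `c`. -/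
noncomputable def cokerBorderEquiv [Fintype m] (A : Matrix l m R)
    (p : l → R) (q : m → R) (a : R) {b c : R} (hb : IsUnit b) (hc : IsUnit c) :
    Coker (fromBlocks A (of ![p, 0])ᵀ (of ![q, 0]) !![a, b; c, 0]).mulVecLin ≃ₗ[R]
      Coker A.mulVecLin :=
  letI := invertibleOfIsUnitDet _ (isUnit_det_fin_two_of_zero a hb hc)
  (cokerSchurComplementEquiv _ _ _ _).trans <| Submodule.quotEquivOfEq _ _ <| by
    rw [invOf_eq_nonsing_inv, border_mul_inv_mul_border, sub_zero]

end Border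

section TildeMat

variable {R : Type*} [CommRing R] {m : ℕ} (B : Matrix (Fin m) (Fin m) R) (v w : Fin m → R) (x : R)

lemma reindex_tildeMat :
    reindex finSumFinEquiv.symm finSumFinEquiv.symm (tildeMat B v w x) =
      fromBlocks B (of ![v, 0])ᵀ (of ![w, 0]) !![x, 1; 0, 0] := by
  ext (i | i) (j | j)
  · simp [tildeMat]
  · fin_cases j <;> simp [tildeMat]
  · fin_cases i <;> simp [tildeMat]
  · fin_cases i <;> fin_cases j <;> simp [tildeMat]

lemma reindex_smul_tildeMat_sub_transpose (τ : R) :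
    reindex finSumFinEquiv.symm finSumFinEquiv.symm
        (τ • tildeMat B v w x - (tildeMat B v w x)ᵀ) =
      fromBlocks (τ • B - Bᵀ) (of ![τ • v - w, 0])ᵀ (of ![τ • w - v, 0])
        !![τ * x - x, τ; -1, 0] := by
  calc reindex finSumFinEquiv.symm finSumFinEquiv.symm
        (τ • tildeMat B v w x - (tildeMat B v w x)ᵀ)
      = τ • reindex finSumFinEquiv.symm finSumFinEquiv.symm (tildeMat B v w x) -
          (reindex finSumFinEquiv.symm finSumFinEquiv.symm (tildeMat B v w x))ᵀ := rfl
    _ = τ • fromBlocks B (of ![v, 0])ᵀ (of ![w, 0]) !![x, 1; 0, 0] -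
          (fromBlocks B (of ![v, 0])ᵀ (of ![w, 0]) !![x, 1; 0, 0])ᵀ := by rw [reindex_tildeMat]
    _ = fromBlocks (τ • B - Bᵀ) (of ![τ • v - w, 0])ᵀ (of ![τ • w - v, 0])
          !![τ * x - x, τ; -1, 0] := by
      rw [fromBlocks_transpose, fromBlocks_smul, sub_eq_add_neg, fromBlocks_neg,
        fromBlocks_add, ← sub_eq_add_neg]
      congr 1
      · ext i j; fin_cases j <;> simp [sub_eq_add_neg]
      · ext i j; fin_cases i <;> simp [sub_eq_add_neg]
      · ext i j; fin_cases i <;> fin_cases j <;> simp [sub_eq_add_neg]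

end TildeMat

theorem coker_tildeMat {R : Type*} [CommRing R] (τ : R) (hτ : IsUnit τ) {m : ℕ}
    (B : Matrix (Fin m) (Fin m) R) (v w : Fin m → R) (x : R) :
    Nonempty (matCoker (τ • tildeMat B v w x - (tildeMat B v w x)ᵀ) ≃ₗ[R]
      matCoker (τ • B - Bᵀ)) := by
  have blockEquiv := cokerReindexEquiv (τ • tildeMat B v w x - (tildeMat B v w x)ᵀ)
    finSumFinEquiv.symm finSumFinEquiv.symm
  rw [reindex_smul_tildeMat_sub_transpose] at blockEquiv
  exact ⟨blockEquiv.trans (cokerBorderEquiv _ _ _ _ hτ isUnit_one.neg)⟩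
end

section
/- Let a, b be integers and let A(a,b) be the 4×4 integer matrix with rows (−1, 1, 0, 0), (0, −1, 0, 0), (0, 0, −1, 1), (a, b, 0, −1). Then in the polynomial ring ℤ[X] one has det(X·A(a,b) − A(a,b)ᵀ) = (X² − X + 1)² + (a² + ab + b²)·X·(X − 1)². Equivalently, the Alexander polynomial determined by the Seifert matrix A(a,b) is Δ_d(t) = (t⁻¹ − 1 + t)² + d·(t⁻¹ − 2 + t) with d = a² + ab + b². -/
/-!
In the block form of a plumbing, both off-diagonal blocks of `t A - Aᵀ` have rank one. The
determinant of such a matrix is `det P * det Q` minus a product of two factors, one for each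
diagonal block: where `P` and `Q` are invertible this is the Schur complement followed by the matrix
determinant lemma, and as a polynomial identity it then holds everywhere. For the trefoil both
factors come from the form `vᵀ adj(t V - Vᵀ) v = (v₀² + v₀ v₁ + v₁²) (1 - t)`.
-/

open Matrix Polynomial

section RankOneOffDiagonal

variable {R S m n : Type*} [CommRing R] [CommRing S]
  [Fintype m] [DecidableEq m] [Fintype n] [DecidableEq n]

theorem adjugate_eq_det_smul_inv {A : Matrix n n R} (hA : IsUnit A.det) :
    A.adjugate = A.det • A⁻¹ := by
  rw [inv_def, smul_smul, Ring.mul_inverse_cancel _ hA, one_smul]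

theorem det_add_vecMulVec_of_isUnit {A : Matrix n n R} (hA : IsUnit A.det) (u v : n → R) :
    (A + vecMulVec u v).det = A.det + v ⬝ᵥ A.adjugate *ᵥ u := by
  rw [vecMulVec_eq Unit, det_add_replicateCol_mul_replicateRow hA, det_unique (n := Unit),
    Matrix.mul_assoc, ← replicateCol_mulVec, adjugate_eq_det_smul_inv hA]
  simp only [Matrix.add_apply, one_apply_eq, replicateRow_mul_replicateCol_apply, smul_mulVec,
    dotProduct_smul, smul_eq_mul, mul_add, mul_one]

theorem det_fromBlocks_vecMulVec_of_isUnit {A : Matrix m m R} {D : Matrix n n R}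
    (hA : IsUnit A.det) (hD : IsUnit D.det) (u y : m → R) (w x : n → R) :
    (fromBlocks A (vecMulVec u w) (vecMulVec x y) D).det =
      A.det * D.det - (y ⬝ᵥ A.adjugate *ᵥ u) * (w ⬝ᵥ D.adjugate *ᵥ x) := by
  let := invertibleOfIsUnitDet A hA
  have schur_complement : D - vecMulVec x y * A⁻¹ * vecMulVec u w =
      D + vecMulVec (-(y ⬝ᵥ A⁻¹ *ᵥ u) • x) w := by
    rw [Matrix.mul_assoc, mul_vecMulVec, vecMulVec_mul_vecMulVec, vecMulVec_smul, neg_smul,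
      neg_vecMulVec, smul_vecMulVec, sub_eq_add_neg]
  rw [det_fromBlocks₁₁, invOf_eq_nonsing_inv, schur_complement, det_add_vecMulVec_of_isUnit hD,
    adjugate_eq_det_smul_inv hA]
  simp only [mulVec_smul, smul_mulVec, dotProduct_smul, smul_eq_mul]
  ring

theorem map_dotProduct_adjugate_mulVec (f : R →+* S) (A : Matrix n n R) (v u : n → R) :
    f (v ⬝ᵥ A.adjugate *ᵥ u) = (f ∘ v) ⬝ᵥ (A.map f).adjugate *ᵥ (f ∘ u) := by
  rw [RingHom.map_dotProduct, ← RingHom.mapMatrix_apply, ← RingHom.map_adjugate]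
  congr 1
  exact funext (RingHom.map_mulVec f A.adjugate u)

theorem map_det_fromBlocks_vecMulVec (f : R →+* S) (A : Matrix m m R) (D : Matrix n n R)
    (u y : m → R) (w x : n → R) :
    f (fromBlocks A (vecMulVec u w) (vecMulVec x y) D).det =
      (fromBlocks (A.map f) (vecMulVec (f ∘ u) (f ∘ w))
        (vecMulVec (f ∘ x) (f ∘ y)) (D.map f)).det := by
  rw [RingHom.map_det, RingHom.mapMatrix_apply, fromBlocks_map]
  congr 2 <;> ext <;> simp [vecMulVec_apply]

theorem det_fromBlocks_vecMulVec_of_mem_nonZeroDivisors {A : Matrix m m R} {D : Matrix n n R}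
    (hA : A.det ∈ nonZeroDivisors R) (hD : D.det ∈ nonZeroDivisors R)
    (u y : m → R) (w x : n → R) :
    (fromBlocks A (vecMulVec u w) (vecMulVec x y) D).det =
      A.det * D.det - (y ⬝ᵥ A.adjugate *ᵥ u) * (w ⬝ᵥ D.adjugate *ᵥ x) := by
  let ι := algebraMap R (FractionRing R)
  have isUnit_A : IsUnit (A.map ι).det := by
    simpa only [ι, RingHom.map_det, RingHom.mapMatrix_apply] using
      IsLocalization.map_units (FractionRing R) ⟨_, hA⟩
  have isUnit_D : IsUnit (D.map ι).det := by
    simpa only [ι, RingHom.map_det, RingHom.mapMatrix_apply] using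
      IsLocalization.map_units (FractionRing R) ⟨_, hD⟩
  apply IsFractionRing.injective R (FractionRing R)
  change ι _ = ι _
  rw [map_det_fromBlocks_vecMulVec, det_fromBlocks_vecMulVec_of_isUnit isUnit_A isUnit_D, map_sub,
    map_mul, map_mul, map_dotProduct_adjugate_mulVec, map_dotProduct_adjugate_mulVec,
    RingHom.map_det, RingHom.map_det, RingHom.mapMatrix_apply, RingHom.mapMatrix_apply]

theorem det_charmatrix_mem_nonZeroDivisors (A : Matrix n n R) :
    (charmatrix A).det ∈ nonZeroDivisors R[X] :=
  (charpoly_monic A).mem_nonZeroDivisors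

theorem charmatrix_neg_map_eval_zero (A : Matrix n n R) :
    (charmatrix (-A)).map (evalRingHom 0) = A := by
  ext i j
  by_cases h : i = j <;> simp [h]

theorem evalRingHom_comp_C_comp {ι : Type*} (r : R) (z : ι → R) :
    evalRingHom r ∘ C ∘ z = z :=
  funext fun i => eval_C (a := z i)

theorem det_fromBlocks_vecMulVec (A : Matrix m m R) (D : Matrix n n R)
    (u y : m → R) (w x : n → R) :
    (fromBlocks A (vecMulVec u w) (vecMulVec x y) D).det =
      A.det * D.det - (y ⬝ᵥ A.adjugate *ᵥ u) * (w ⬝ᵥ D.adjugate *ᵥ x) := by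
  -- Deform `A` and `D` to `X + A` and `X + D`, whose determinants are monic, then set `X = 0`.
  have deformed := congrArg (evalRingHom 0) <|
    det_fromBlocks_vecMulVec_of_mem_nonZeroDivisors
      (det_charmatrix_mem_nonZeroDivisors (-A)) (det_charmatrix_mem_nonZeroDivisors (-D))
      (C ∘ u) (C ∘ y) (C ∘ w) (C ∘ x)
  rw [map_det_fromBlocks_vecMulVec] at deformed
  simpa only [map_sub, map_mul, map_dotProduct_adjugate_mulVec, RingHom.map_det,
    RingHom.mapMatrix_apply, charmatrix_neg_map_eval_zero, evalRingHom_comp_C_comp]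
    using deformed

end RankOneOffDiagonal

section Plumbing

variable {R m n : Type*} [CommRing R]

/-- The pencil `t V - Vᵀ` of a Seifert matrix `V`, with the polynomial variable as `t`. -/
noncomputable def seifertPencil (V : Matrix n n R) : Matrix n n R[X] :=
  (X : R[X]) • V.map C - (V.map C)ᵀ

/-- The Seifert matrix of a plumbing of two surfaces with Seifert matrices `V` and `W`. The vectors
`v` and `w` are the classes of the plumbing intervals, in coordinates given by intersection numbers
with the basis cycles: the entry at `(j, i)` of the lower left block is the product of those of the
`j`-th cycle of the second surface and the `i`-th cycle of the first. -/
def plumbing (V : Matrix m m R) (W : Matrix n n R) (v : m → R) (w : n → R) :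
    Matrix (m ⊕ n) (m ⊕ n) R :=
  fromBlocks V 0 (vecMulVec w v) W

theorem seifertPencil_plumbing (V : Matrix m m R) (W : Matrix n n R) (v : m → R) (w : n → R) :
    seifertPencil (plumbing V W v w) =
      fromBlocks (seifertPencil V) (vecMulVec (-(C ∘ v)) (C ∘ w))
        (vecMulVec ((X : R[X]) • (C ∘ w)) (C ∘ v)) (seifertPencil W) := by
  ext (i | i) (j | j) : 2 <;>
    simp [seifertPencil, plumbing, vecMulVec_apply, mul_comm (C (v _))]

variable [Fintype m] [DecidableEq m] [Fintype n] [DecidableEq n]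

/-- The unnormalized Alexander polynomial `det (t V - Vᵀ)` of a Seifert matrix `V`. -/
noncomputable def alexanderPoly (V : Matrix n n R) : R[X] :=
  (seifertPencil V).det

/-- The quadratic form `vᵀ adj(t V - Vᵀ) v` in the class `v` of a plumbing interval: the factor that
the surface contributes to the correction term of `alexanderPoly_plumbing`. -/
noncomputable def plumbingForm (V : Matrix n n R) (v : n → R) : R[X] :=
  (C ∘ v) ⬝ᵥ (seifertPencil V).adjugate *ᵥ (C ∘ v)

theorem alexanderPoly_reindex (e : m ≃ n) (V : Matrix m m R) :
    alexanderPoly (reindex e e V) = alexanderPoly V :=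
  det_reindex_self e (seifertPencil V)

theorem alexanderPoly_plumbing (V : Matrix m m R) (W : Matrix n n R) (v : m → R) (w : n → R) :
    alexanderPoly (plumbing V W v w) =
      alexanderPoly V * alexanderPoly W + X * (plumbingForm V v * plumbingForm W w) := by
  rw [alexanderPoly, seifertPencil_plumbing, det_fromBlocks_vecMulVec]
  simp only [alexanderPoly, plumbingForm, mulVec_neg, dotProduct_neg, mulVec_smul, dotProduct_smul,
    smul_eq_mul]
  ring

end Plumbing

section Trefoil

variable {R : Type*} [CommRing R]

variable (R) in
/-- The Seifert matrix of the fiber surface of the positive trefoil. -/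
def trefoilSeifert : Matrix (Fin 2) (Fin 2) R :=
  !![-1, 1; 0, -1]

theorem seifertPencil_trefoilSeifert :
    seifertPencil (trefoilSeifert R) = !![1 - X, X; -1, 1 - X] := by
  ext i j : 2
  fin_cases i <;> fin_cases j <;> simp [seifertPencil, trefoilSeifert] <;> ring

theorem alexanderPoly_trefoilSeifert : alexanderPoly (trefoilSeifert R) = X ^ 2 - X + 1 := by
  rw [alexanderPoly, seifertPencil_trefoilSeifert, det_fin_two_of]
  ring

theorem plumbingForm_trefoilSeifert (a b : R) :
    plumbingForm (trefoilSeifert R) ![a, b] = C (a ^ 2 + a * b + b ^ 2) * (1 - X) := by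
  rw [plumbingForm, seifertPencil_trefoilSeifert, adjugate_fin_two_of]
  simp only [dotProduct, mulVec, Fin.sum_univ_two, Function.comp_apply, of_apply, cons_val_zero,
    cons_val_one, map_add, map_mul, map_pow]
  ring

theorem reindex_plumbing_trefoilSeifert (a b c d : R) :
    reindex finSumFinEquiv finSumFinEquiv
        (plumbing (trefoilSeifert R) (trefoilSeifert R) ![a, b] ![c, d]) =
      !![-1, 1, 0, 0; 0, -1, 0, 0; c * a, c * b, -1, 1; d * a, d * b, 0, -1] := by
  ext i j
  fin_cases i <;> fin_cases j <;> rfl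

theorem alexander_poly_two_trefoil_plumbing_general (a b c d : R) :
    alexanderPoly !![-1, 1, 0, 0; 0, -1, 0, 0; c * a, c * b, -1, 1; d * a, d * b, 0, -1] =
      (X ^ 2 - X + 1) ^ 2 +
        C ((a ^ 2 + a * b + b ^ 2) * (c ^ 2 + c * d + d ^ 2)) * X * (X - 1) ^ 2 := by
  rw [← reindex_plumbing_trefoilSeifert, alexanderPoly_reindex, alexanderPoly_plumbing,
    alexanderPoly_trefoilSeifert, plumbingForm_trefoilSeifert, plumbingForm_trefoilSeifert, C_mul]
  ring

end Trefoil

theorem alexander_poly_two_trefoil_plumbing (a b : ℤ) :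
    Matrix.det
      ((X : ℤ[X]) • (!![-1, 1, 0, 0; 0, -1, 0, 0; 0, 0, -1, 1; a, b, 0, -1]).map
          (Polynomial.C : ℤ → ℤ[X]) -
        ((!![-1, 1, 0, 0; 0, -1, 0, 0; 0, 0, -1, 1; a, b, 0, -1]).map
          (Polynomial.C : ℤ → ℤ[X]))ᵀ) =
      (X ^ 2 - X + 1) ^ 2 +
        Polynomial.C (a ^ 2 + a * b + b ^ 2) * X * (X - 1) ^ 2 := by
  simpa only [alexanderPoly, seifertPencil, zero_mul, one_mul, zero_pow two_ne_zero, one_pow,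
    zero_add, mul_one] using alexander_poly_two_trefoil_plumbing_general a b 0 1
end

section
/- Let ω = e^{0.11πi} ∈ ℂ and let M be the 3×3 complex matrix with rows (−1, 1, 0), (0, −1, 0), (0, 0, −1). Then the matrix H = (1 − ω)·M + (1 − ω̄)·Mᵀ is Hermitian and has exactly one positive eigenvalue and two negative eigenvalues (counted with multiplicity). -/
open Matrix Complex

/-!
For `V` the given 3 × 3 matrix, the form `(1 - ω)V + (1 - ω̄)Vᵀ` is block diagonal, with a 1 × 1
block `-2(1 - Re ω)` and a 2 × 2 block having this number twice on the diagonal and `1 - ω` and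
its conjugate off it. Its eigenvalues are therefore `-2(1 - Re ω)` and `-2(1 - Re ω) ± ‖1 - ω‖`, so
exactly one of them is positive and the others are negative as soon as `0 < 2(1 - Re ω) < ‖1 - ω‖`.
For `ω = exp(iθ)` this condition reads `0 < 4 sin²(θ/2) < 2 |sin(θ/2)|`,
which holds for `0 < θ < π/3`.
-/

section Eigenvalues

open Polynomial

variable {𝕜 n : Type*} [RCLike 𝕜] [Fintype n] [DecidableEq n] {A : Matrix n n 𝕜}
  {s : Multiset ℝ}

theorem map_eigenvalues_eq_of_charpoly_eq (hA : A.IsHermitian)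
    (hs : A.charpoly = (s.map fun a : ℝ => X - C (a : 𝕜)).prod) :
    Finset.univ.val.map hA.eigenvalues = s := by
  apply Multiset.map_injective (RCLike.ofReal_injective (K := 𝕜))
  calc (Finset.univ.val.map hA.eigenvalues).map RCLike.ofReal
      = A.charpoly.roots := by
        rw [hA.roots_charpoly_eq_eigenvalues, Multiset.map_map]
    _ = s.map RCLike.ofReal := by
        rw [hs, ← roots_multiset_prod_X_sub_C (s.map RCLike.ofReal), Multiset.map_map]
        rfl

theorem card_filter_eigenvalues_eq_countP (hA : A.IsHermitian)
    (hs : A.charpoly = (s.map fun a : ℝ => X - C (a : 𝕜)).prod)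
    (p : ℝ → Prop) [DecidablePred p] :
    (Finset.univ.filter fun i => p (hA.eigenvalues i)).card = s.countP p := by
  rw [← map_eigenvalues_eq_of_charpoly_eq hA hs, Multiset.countP_map]
  rfl

end Eigenvalues

section LevineTristram

open Polynomial

/-- The matrix `(1 - ω)V + (1 - ω̄)Vᵀ` attached to a Seifert matrix `V`. For `V` real and `ω` on the
unit circle its signature is the Levine–Tristram signature at `ω`; neither condition is built in. -/
def levineTristramForm {n : Type*} (V : Matrix n n ℂ) (ω : ℂ) : Matrix n n ℂ :=
  (1 - ω) • V + (1 - (starRingEnd ℂ) ω) • Vᵀ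

theorem isHermitian_levineTristramForm {n : Type*} {V : Matrix n n ℂ} (hV : Vᴴ = Vᵀ) (ω : ℂ) :
    (levineTristramForm V ω).IsHermitian := by
  have hVt : Vᵀᴴ = V := by rw [← hV, conjTranspose_conjTranspose]
  simp [IsHermitian, levineTristramForm, hV, hVt, add_comm]

/-- The top-left 3 × 3 block of the Seifert matrix of a plumbing of two positive trefoils. -/
def trefoilPlumbingMinor : Matrix (Fin 3) (Fin 3) ℂ :=
  !![-1, 1, 0; 0, -1, 0; 0, 0, -1]

theorem conjTranspose_trefoilPlumbingMinor :
    trefoilPlumbingMinorᴴ = trefoilPlumbingMinorᵀ := by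
  ext i j
  fin_cases i <;> fin_cases j <;> simp [trefoilPlumbingMinor]

theorem levineTristramForm_trefoilPlumbingMinor (ω : ℂ) :
    levineTristramForm trefoilPlumbingMinor ω =
      !![((-(2 * (1 - ω.re)) : ℝ) : ℂ), 1 - ω, 0;
         1 - (starRingEnd ℂ) ω, ((-(2 * (1 - ω.re)) : ℝ) : ℂ), 0;
         0, 0, ((-(2 * (1 - ω.re)) : ℝ) : ℂ)] := by
  have hdiag : ((-(2 * (1 - ω.re)) : ℝ) : ℂ) = -(1 - ω) - (1 - (starRingEnd ℂ) ω) := by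
    have hre := add_conj ω
    push_cast at hre ⊢
    linear_combination -hre
  rw [hdiag]
  ext i j
  fin_cases i <;> fin_cases j <;>
    simp [levineTristramForm, trefoilPlumbingMinor] <;> ring

theorem charpoly_of_two_one_block {R : Type*} [CommRing R] (a b c d e : R) :
    (!![a, b, 0; c, d, 0; 0, 0, e] : Matrix (Fin 3) (Fin 3) R).charpoly =
      ((X - C a) * (X - C d) - C (b * c)) * (X - C e) := by
  simp [Matrix.charpoly, det_fin_three, sub_mul]

theorem charpoly_levineTristramForm_trefoilPlumbingMinor (ω : ℂ) :
    (levineTristramForm trefoilPlumbingMinor ω).charpoly =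
      (({-(2 * (1 - ω.re)), -(2 * (1 - ω.re)) + ‖1 - ω‖, -(2 * (1 - ω.re)) - ‖1 - ω‖} :
        Multiset ℝ).map fun a : ℝ => X - C (a : ℂ)).prod := by
  have hnorm : (1 - ω) * (1 - (starRingEnd ℂ) ω) = (‖1 - ω‖ : ℂ) * ‖1 - ω‖ := by
    rw [← sq, ← mul_conj', map_sub, map_one]
  rw [levineTristramForm_trefoilPlumbingMinor, charpoly_of_two_one_block, hnorm]
  simp only [Multiset.insert_eq_cons, Multiset.map_cons, Multiset.map_singleton,
    Multiset.prod_cons, Multiset.prod_singleton, ofReal_add _ ‖1 - ω‖, ofReal_sub _ ‖1 - ω‖,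
    C_add, C_sub, C_mul]
  ring

theorem hermitian_3x3_one_pos_two_neg_general {ω : ℂ} (hre : ω.re < 1)
    (hω : 2 * (1 - ω.re) < ‖1 - ω‖) :
    ∃ hH : (levineTristramForm trefoilPlumbingMinor ω).IsHermitian,
      (Finset.univ.filter fun i : Fin 3 => 0 < hH.eigenvalues i).card = 1 ∧
      (Finset.univ.filter fun i : Fin 3 => hH.eigenvalues i < 0).card = 2 := by
  have hH := isHermitian_levineTristramForm conjTranspose_trefoilPlumbingMinor ω
  have hcount := card_filter_eigenvalues_eq_countP hH
    (charpoly_levineTristramForm_trefoilPlumbingMinor ω)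
  have hmid : -(2 * (1 - ω.re)) < 0 := by linarith
  have hmax : 0 < -(2 * (1 - ω.re)) + ‖1 - ω‖ := by linarith
  have hmin : -(2 * (1 - ω.re)) - ‖1 - ω‖ < 0 := by linarith
  refine ⟨hH, (hcount (0 < ·)).trans ?_, (hcount (· < 0)).trans ?_⟩ <;>
    simp only [Multiset.insert_eq_cons, ← Multiset.cons_zero, Multiset.countP_cons,
      Multiset.countP_zero, hmid, hmax, hmin, hmid.not_gt, hmax.not_gt, hmin.not_gt, if_true,
      if_false]

end LevineTristram

section UnitCircle

variable {θ : ℝ}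

theorem exp_ofReal_mul_I_re_lt_one (hθ : 0 < θ) (hθπ : θ ≤ Real.pi) :
    (exp (θ * I)).re < 1 := by
  rw [exp_ofReal_mul_I_re, ← Real.cos_zero]
  exact Real.cos_lt_cos_of_nonneg_of_le_pi le_rfl hθπ hθ

theorem two_mul_one_sub_re_lt_norm_one_sub_exp (hθ : 0 < θ) (hθπ : θ < Real.pi / 3) :
    2 * (1 - (exp (θ * I)).re) < ‖1 - exp (θ * I)‖ := by
  have hpos : 0 < Real.sin (θ / 2) := Real.sin_pos_of_pos_of_lt_pi (by linarith) (by linarith)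
  have hhalf : Real.sin (θ / 2) < 1 / 2 := by
    rw [← Real.sin_pi_div_six]
    exact Real.sin_lt_sin_of_lt_of_le_pi_div_two (by linarith) (by linarith) (by linarith)
  have hcos : Real.cos θ = 1 - 2 * Real.sin (θ / 2) ^ 2 := by
    rw [Real.sin_sq_eq_half_sub, mul_div_cancel₀ θ two_ne_zero]
    ring
  calc 2 * (1 - (exp (θ * I)).re)
      = 2 * Real.sin (θ / 2) * (2 * Real.sin (θ / 2)) := by
        rw [exp_ofReal_mul_I_re, hcos]
        ring
    _ < 2 * Real.sin (θ / 2) := mul_lt_of_lt_one_right (by linarith) (by linarith)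
    _ = ‖1 - exp (θ * I)‖ := by
        rw [norm_sub_rev, mul_comm (θ : ℂ), norm_exp_I_mul_ofReal_sub_one, Real.norm_eq_abs,
          abs_of_pos (by positivity)]

end UnitCircle

theorem hermitian_3x3_one_pos_two_neg :
    ∀ ω : ℂ, ω = Complex.exp ((0.11 * Real.pi : ℝ) * Complex.I) →
    ∀ M : Matrix (Fin 3) (Fin 3) ℂ, M = !![-1, 1, 0; 0, -1, 0; 0, 0, -1] →
    ∃ hH : ((1 - ω) • M + (1 - (starRingEnd ℂ) ω) • Mᵀ).IsHermitian,
      (Finset.univ.filter fun i : Fin 3 => 0 < hH.eigenvalues i).card = 1 ∧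
      (Finset.univ.filter fun i : Fin 3 => hH.eigenvalues i < 0).card = 2 := by
  rintro _ rfl _ rfl
  have hθ : 0 < 0.11 * Real.pi := by positivity
  have hθπ : 0.11 * Real.pi < Real.pi / 3 := by linarith [Real.pi_pos]
  exact hermitian_3x3_one_pos_two_neg_general (exp_ofReal_mul_I_re_lt_one hθ (by linarith))
    (two_mul_one_sub_re_lt_norm_one_sub_exp hθ hθπ)
end
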